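/- Let K be a field, n ≥ 2, and 1 ≤ m ≤ n − 1. Let A, B ∈ GL(n, K) be cyclic matrices, and let P₁ ∈ GL(m, K), P₂ ∈ GL(n−m, K) satisfy det P₁ · det P₂ = det A · det B. Then there exist a matrix C ∈ M(m × (n−m), K) and X, Y ∈ GL(n, K) such that the block upper triangular matrix [[P₁, C], [0, P₂]] equals (X A X⁻¹) · (Y B Y⁻¹). -/

import Mathlib

open Matrix Polynomial

noncomputable section

/-- A matrix is cyclic if its characteristic polynomial equals its minimal polynomial. -/
def IsCyclicMat {ι : Type*} [Fintype ι] [DecidableEq ι] {K : Type*} [Field K]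
    (A : Matrix ι ι K) : Prop :=
  A.charpoly = minpoly K A

/-- A matrix is nonprimary if its characteristic polynomial is a product of two
coprime nonconstant monic polynomials. -/
def IsNonprimary {ι : Type*} [Fintype ι] [DecidableEq ι] {K : Type*} [Field K]
    (M : Matrix ι ι K) : Prop :=
  ∃ f g : Polynomial K, f.Monic ∧ g.Monic ∧ 0 < f.natDegree ∧ 0 < g.natDegree ∧
    IsCoprime f g ∧ M.charpoly = f * g

/-- A transvection: `T ≠ 1`, `(T - 1)² = 0` and `rank (T - 1) = 1`. -/
def IsTransvection {ι : Type*} [Fintype ι] [DecidableEq ι] {K : Type*} [Field K]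
    (T : Matrix ι ι K) : Prop :=
  T ≠ 1 ∧ (T - 1) * (T - 1) = 0 ∧ (T - 1).rank = 1


theorem exists_cyc {ι : Type*} [Fintype ι] [DecidableEq ι] {K : Type*} [Field K]
    (B : Matrix ι ι K) (hB : B.charpoly = minpoly K B) :
    ∃ v : ι → K, ∀ W : Submodule K (ι → K), v ∈ W → (∀ x ∈ W, B *ᵥ x ∈ W) → W = ⊤ := by
  set φ : Module.End K (ι → K) := Matrix.toLin' B with hφ
  obtain ⟨x, hx⟩ := Module.exists_ker_toSpanSingleton_eq_annihilator K[X] (Module.AEval' φ)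
  set v : ι → K := (Module.AEval'.of φ).symm x with hv
  have key : ∀ f : K[X], aeval φ f v = 0 → B.charpoly ∣ f := by
    intro f hf
    have h1 : f ∈ Module.annihilator K[X] (Module.AEval' φ) := by
      rw [← hx, LinearMap.mem_ker, LinearMap.toSpanSingleton_apply]
      apply (Module.AEval'.of φ).symm.injective
      rw [map_zero, ← hf, hv]
      exact Module.AEval.of_symm_smul (a := φ) f x
    rw [hB, ← Matrix.minpoly_toLin']
    rw [← span_minpoly_eq_annihilator, Ideal.mem_span_singleton] at h1
    exact h1
  refine ⟨v, fun W hvW hW => ?_⟩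
  have hmem : ∀ f : K[X], aeval φ f v ∈ W := by
    intro f
    induction f using Polynomial.induction_on' with
    | add p q hp hq => simpa using W.add_mem hp hq
    | monomial n a =>
      rw [aeval_monomial]
      have : (φ ^ n) v ∈ W := by
        induction n with
        | zero => simpa
        | succ n ih =>
          rw [pow_succ']
          exact hW _ ih
      simpa [Module.algebraMap_end_apply] using W.smul_mem a this
  let g : degreeLT K (Fintype.card ι) →ₗ[K] W :=
    { toFun := fun f => ⟨aeval φ f.1 v, hmem f.1⟩
      map_add' := by intro a b; ext1; simp
      map_smul' := by intro a b; ext1; simp }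
  have hg : Function.Injective g := by
    rw [← LinearMap.ker_eq_bot, LinearMap.ker_eq_bot']
    intro f hf
    have h1 : aeval φ f.1 v = 0 := congrArg Subtype.val hf
    have h2 := key _ h1
    have h3 := mem_degreeLT.1 f.2
    ext1
    refine Polynomial.eq_zero_of_dvd_of_degree_lt h2 ?_
    rwa [Matrix.charpoly_degree_eq_dim]
  have h5 := LinearMap.finrank_le_finrank_of_injective hg
  rw [(degreeLTEquiv K (Fintype.card ι)).finrank_eq] at h5
  apply Submodule.eq_top_of_finrank_eq
  apply le_antisymm (Submodule.finrank_le _)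
  simpa using h5

theorem minpoly_transpose' {ι : Type*} [Fintype ι] [DecidableEq ι] {K : Type*} [Field K]
    (B : Matrix ι ι K) : minpoly K Bᵀ = minpoly K B := by
  have h : ∀ f : K[X], aeval Bᵀ f = (aeval B f)ᵀ := by
    intro f
    induction f using Polynomial.induction_on' with
    | add p q hp hq => simp [hp, hq]
    | monomial n a => simp [aeval_monomial, Matrix.transpose_pow, Algebra.algebraMap_eq_smul_one]
  have hd : ∀ C : Matrix ι ι K, IsIntegral K C := fun C => Matrix.isIntegral C
  apply Polynomial.eq_of_monic_of_associated (minpoly.monic (hd _)) (minpoly.monic (hd _))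
  apply associated_of_dvd_dvd
  · apply minpoly.dvd
    rw [h, minpoly.aeval, transpose_zero]
  · apply minpoly.dvd
    have := h (minpoly K Bᵀ)
    rw [minpoly.aeval] at this
    rw [← transpose_transpose (aeval B _), ← this, transpose_zero]

theorem cyc_transpose_swap {α β : Type*} [Fintype α] [DecidableEq α] [Fintype β] [DecidableEq β]
    {K : Type*} [Field K]
    (B : Matrix α α K) (e : β ≃ α) (hB : B.charpoly = minpoly K B) :
    (Bᵀ.submatrix e e).charpoly = minpoly K (Bᵀ.submatrix e e) := by
  have h1 : Bᵀ.submatrix e e = Matrix.reindexAlgEquiv K K e.symm Bᵀ := by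
    ext; simp
  have h2 : Bᵀ.submatrix e e = Matrix.reindex e.symm e.symm Bᵀ := by
    ext; simp
  conv_lhs => rw [h2]
  rw [h1, minpoly.algEquiv_eq, minpoly_transpose', Matrix.charpoly_reindex, Matrix.charpoly_transpose, hB]

/-- every matrix is similar to LR -/
theorem exists_LU {K : Type*} [Field K] : ∀ (k : ℕ) (P : Matrix (Fin k) (Fin k) K),
    ∃ Q L R : Matrix (Fin k) (Fin k) K, IsUnit Q.det ∧ (∀ i j, i < j → L i j = 0) ∧
      (∀ i j, j < i → R i j = 0) ∧ P * Q = Q * (L * R) := by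
  intro k
  induction k with
  | zero => intro P; exact ⟨1, 1, 1, by simp, fun i => i.elim0, fun i => i.elim0, by ext i; exact i.elim0⟩
  | succ k ih =>
    have main : ∀ (P : Matrix (Fin (k+1)) (Fin (k+1)) K) (ρ : Fin k → K),
        (∀ j : Fin k, P 0 j.succ = P 0 0 * ρ j) →
        ∃ Q L R : Matrix (Fin (k+1)) (Fin (k+1)) K, IsUnit Q.det ∧ (∀ i j, i < j → L i j = 0) ∧
          (∀ i j, j < i → R i j = 0) ∧ P * Q = Q * (L * R) := by
      intro P ρ hρ
      obtain ⟨Q, L, R, hQ, hL, hR, h⟩ := ih (Matrix.of fun i j => P i.succ j.succ - P i.succ 0 * ρ j)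
      set ℓ : Fin k → K := Q⁻¹ *ᵥ (fun i => P i.succ 0) with hℓ
      have hQℓ : Q *ᵥ ℓ = fun i => P i.succ 0 := by
        rw [hℓ, mulVec_mulVec, Matrix.mul_nonsing_inv _ hQ, one_mulVec]
      refine ⟨Matrix.of (Fin.cons (Fin.cons 1 0) (fun i => Fin.cons 0 (Q i))),
        Matrix.of (Fin.cons (Fin.cons (P 0 0) 0) (fun i => Fin.cons (ℓ i) (L i))),
        Matrix.of (Fin.cons (Fin.cons 1 (ρ ᵥ* Q)) (fun i => Fin.cons 0 (R i))), ?_, ?_, ?_, ?_⟩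
      · rw [Matrix.det_succ_row_zero, Fin.sum_univ_succ]
        have hQ' : (Matrix.of fun i j => Q i j) = Q := rfl
        simpa [Matrix.submatrix, Fin.succAbove_zero, hQ'] using hQ
      · intro i j
        refine Fin.cases ?_ (fun i => ?_) i <;> refine Fin.cases ?_ (fun j => ?_) j
        · simp
        · simp
        · simp
        · simpa using hL i j
      · intro i j
        refine Fin.cases ?_ (fun i => ?_) i <;> refine Fin.cases ?_ (fun j => ?_) j
        · simp
        · simp
        · simp
        · simpa using hR i j
      · ext i j
        refine Fin.cases ?_ (fun i => ?_) i <;> refine Fin.cases ?_ (fun j => ?_) j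
        · simp [Matrix.mul_apply, Fin.sum_univ_succ]
        · simp [Matrix.mul_apply, Fin.sum_univ_succ, hρ, vecMul, dotProduct, Finset.mul_sum, mul_assoc]
        · have := congrFun hQℓ i
          simp only [mulVec, dotProduct] at this
          simp [Matrix.mul_apply, Fin.sum_univ_succ, this]
        · have h1 := congrFun hQℓ i
          have h2 := congrFun (congrFun h i) j
          simp only [mulVec, dotProduct] at h1
          simp only [Matrix.mul_apply, Matrix.of_apply, sub_mul, Finset.sum_sub_distrib] at h2
          simp only [Matrix.mul_apply, Fin.sum_univ_succ, Matrix.of_apply, Fin.cons_succ, Fin.cons_zero,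
            Pi.zero_apply, mul_zero, zero_mul, zero_add, mul_add, Finset.sum_add_distrib, ← h2, vecMul, dotProduct]
          simp only [← mul_assoc, ← Finset.sum_mul, h1]
          simp only [mul_assoc, ← Finset.mul_sum]
          ring
    intro P
    by_cases h0 : P 0 0 = 0
    · by_cases h1 : ∃ j, P 0 j ≠ 0
      · obtain ⟨j, hj⟩ := h1
        have hj0 : j ≠ 0 := by rintro rfl; exact hj h0
        have hdet : (transvection j 0 (1:K)).det = 1 := det_transvection_of_ne _ _ hj0 _
        have hinv : transvection j 0 (1:K) * transvection j 0 (-1:K) = 1 := by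
          rw [transvection_mul_transvection_same _ _ hj0]; simp
        set P' := transvection j 0 (-1:K) * P * transvection j 0 (1:K) with hP'
        have h00 : P' 0 0 ≠ 0 := by
          simp [hP', hj0.symm, h0, hj]
        obtain ⟨Q, L, R, hQ, hL, hR, h⟩ := main P' (fun j => P' 0 j.succ / P' 0 0) (fun j => by field_simp)
        refine ⟨transvection j 0 (1:K) * Q, L, R, ?_, hL, hR, ?_⟩
        · rw [det_mul, hdet, one_mul]; exact hQ
        · rw [mul_assoc, ← h, hP']
          simp only [← mul_assoc, hinv, one_mul]
      · push Not at h1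
        exact main P 0 (fun j => by simp [h1])
    · exact main P (fun j => P 0 j.succ / P 0 0) (fun j => by field_simp)

theorem first_block {K : Type*} [Field K] (T : ℕ → ℕ → K) (hT : ∀ i, T i i ≠ 0) (N : ℕ) :
    ∃ f : ℕ → K[X], f 0 = 1 ∧
      (∀ j < N, f (j+1) = X * ∑ i ∈ Finset.range (j+1), C (T i j) * f i) ∧
      (∀ j ≤ N, (f j).natDegree ≤ j ∧ (f j).coeff j ≠ 0) := by
  induction N with
  | zero => exact ⟨fun _ => 1, rfl, fun j hj => by omega, fun j hj => by
      obtain rfl : j = 0 := by omega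
      simp⟩
  | succ N ih =>
    obtain ⟨f, f0, f1, f2⟩ := ih
    set u : K[X] := X * ∑ i ∈ Finset.range (N+1), C (T i N) * f i with hu
    set f' : ℕ → K[X] := fun j => if j ≤ N then f j else u with hf'
    have hle : ∀ j ≤ N, f' j = f j := fun j hj => by simp [hf', hj]
    have hlast : f' (N+1) = u := by simp [hf']
    have hsum : ∀ j ≤ N, ∑ i ∈ Finset.range (j+1), C (T i j) * f' i
        = ∑ i ∈ Finset.range (j+1), C (T i j) * f i := fun j hj =>
      Finset.sum_congr rfl fun i hi => by
        rw [hle i (by have := Finset.mem_range.1 hi; omega)]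
    refine ⟨f', by rw [hle 0 (by omega), f0], fun j hj => ?_, fun j hj => ?_⟩
    · rw [hsum j (by omega)]
      rcases Nat.lt_succ_iff_lt_or_eq.1 hj with h | rfl
      · rw [hle _ (by omega), f1 j h]
      · rw [hlast, hu]
    · rcases Nat.le_succ_iff.1 hj with h | rfl
      · rw [hle _ h]; exact f2 j h
      · rw [Nat.succ_eq_add_one, hlast]
        constructor
        · rw [hu]
          refine natDegree_mul_le.trans ?_
          rw [natDegree_X, add_comm]
          gcongr
          apply natDegree_sum_le_of_forall_le
          intro i hi
          have := Finset.mem_range.1 hi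
          exact (natDegree_C_mul_le _ _).trans ((f2 i (by omega)).1.trans (by omega))
        · rw [hu, coeff_X_mul, finsetSum_coeff, Finset.sum_range_succ, Finset.sum_eq_zero]
          · simpa using ⟨hT N, (f2 N le_rfl).2⟩
          · intro i hi
            have := Finset.mem_range.1 hi
            rw [coeff_C_mul, coeff_eq_zero_of_natDegree_lt, mul_zero]
            exact lt_of_le_of_lt (f2 i (by omega)).1 this

theorem span_first {K : Type*} [Field K] (f : ℕ → K[X]) (p : ℕ)
    (hf : ∀ j < p, (f j).natDegree ≤ j ∧ (f j).coeff j ≠ 0) :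
    ∀ u : K[X], u ∈ degreeLT K p → ∃ a : ℕ → K, u = ∑ i ∈ Finset.range p, C (a i) * f i := by
  induction p with
  | zero =>
    intro u hu
    refine ⟨0, ?_⟩
    have := mem_degreeLT.1 hu
    simpa using this
  | succ p ih =>
    intro u hu
    obtain ⟨h1, h2⟩ := hf p (by omega)
    set c := u.coeff p / (f p).coeff p with hc
    obtain ⟨a, ha⟩ := ih (fun j hj => hf j (by omega)) (u - C c * f p) (by
      rw [mem_degreeLT, degree_lt_iff_coeff_zero] at *
      intro m hm
      rcases eq_or_lt_of_le hm with rfl | hm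
      · simp [hc, h2]
      · rw [coeff_sub, hu m (by exact hm), coeff_C_mul, coeff_eq_zero_of_natDegree_lt (lt_of_le_of_lt h1 hm)]
        simp)
    refine ⟨fun i => if i < p then a i else c, ?_⟩
    rw [Finset.sum_range_succ, Finset.sum_congr rfl (g := fun i => C (a i) * f i)]
    · rw [← ha]; simp
    · intro i hi
      simp [Finset.mem_range.1 hi]

theorem reach {K : Type*} [Field K] (T : ℕ → ℕ → K) (hT : ∀ i, T i i ≠ 0) (p : ℕ) (hp : 0 < p)
    (h0 : K[X]) (hh0 : h0.natDegree ≤ p) (k : ℕ) : ∀ (a : ℕ → K), a k ≠ 0 →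
    ∀ t : K[X], t.natDegree ≤ p + k →
      t.coeff (p + k) = a k * ((∏ i ∈ Finset.range k, T i i) * h0.coeff p) →
    ∃ h s : ℕ → K[X], h 0 = h0 ∧ (∀ j, s j ∈ degreeLT K p) ∧
      (∀ j < k, h (j+1) = X * (∑ i ∈ Finset.range (j+1), C (T i j) * h i + s j)) ∧
      (∑ i ∈ Finset.range (k+1), C (a i) * h i) - t ∈ degreeLT K p := by
  induction k with
  | zero =>
    intro a ha t ht hlt
    refine ⟨fun _ => h0, 0, rfl, fun j => Submodule.zero_mem _, fun j hj => by omega, ?_⟩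
    rw [mem_degreeLT, degree_lt_iff_coeff_zero]
    intro m hm
    rcases eq_or_lt_of_le hm with rfl | hm
    · simp at hlt
      simp [hlt]
    · simp [coeff_eq_zero_of_natDegree_lt (lt_of_le_of_lt hh0 hm),
        coeff_eq_zero_of_natDegree_lt (lt_of_le_of_lt ht hm)]
  | succ k ih =>
    intro a ha t ht hlt
    set a' : ℕ → K := fun i => ∑ j ∈ Finset.Ico i (k+1), a (j+1) * T i j with ha'
    set t' := divX (t - C (a 0) * h0) with ht'
    have hak : a' k = a (k+1) * T k k := by simp [ha']
    obtain ⟨h, s, e0, e1, e2, e3⟩ := ih a' (by rw [hak]; exact mul_ne_zero ha (hT k)) t' (by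
        rw [ht', natDegree_divX_eq_natDegree_tsub_one]
        have : (t - C (a 0) * h0).natDegree ≤ p + k + 1 := by
          refine (natDegree_sub_le _ _).trans (max_le (ht.trans (by omega))
            ((natDegree_C_mul_le _ _).trans (hh0.trans (by omega))))
        omega) (by
        rw [ht', coeff_divX, coeff_sub, coeff_C_mul,
          coeff_eq_zero_of_natDegree_lt (p := h0) (by omega), mul_zero, sub_zero, add_assoc, hlt, hak,
          Finset.prod_range_succ]
        ring)
    set e := (∑ i ∈ Finset.range (k+1), C (a' i) * h i) - t' with he
    set sk : K[X] := -(C (a (k+1))⁻¹ * (e + ∑ j ∈ Finset.range k, C (a (j+1)) * s j)) with hsk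
    have hskm : sk ∈ degreeLT K p := by
      rw [hsk, ← smul_eq_C_mul]
      refine Submodule.neg_mem _ (Submodule.smul_mem _ _ (Submodule.add_mem _ e3
        (Submodule.sum_mem _ fun j _ => ?_)))
      rw [← smul_eq_C_mul]
      exact Submodule.smul_mem _ _ (e1 j)
    set s' : ℕ → K[X] := fun j => if j < k then s j else sk with hs'
    set h' : ℕ → K[X] := fun j => if j ≤ k then h j else
      X * (∑ i ∈ Finset.range (k+1), C (T i k) * h i + sk) with hh'
    have hle : ∀ j ≤ k, h' j = h j := fun j hj => by simp [hh', hj]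
    have hlast : h' (k+1) = X * (∑ i ∈ Finset.range (k+1), C (T i k) * h i + sk) := by simp [hh']
    have hrec : ∀ j < k + 1,
        h' (j+1) = X * (∑ i ∈ Finset.range (j+1), C (T i j) * h i + s' j) := by
      intro j hj
      rcases Nat.lt_succ_iff_lt_or_eq.1 hj with hlt | rfl
      · rw [hle _ (by omega), e2 j hlt]; simp [hs', hlt]
      · rw [hlast]; simp [hs']
    refine ⟨h', s', by rw [hle 0 (by omega), e0], fun j => ?_, fun j hj => ?_, ?_⟩
    · by_cases hj : j < k
      · simpa [hs', hj] using e1 j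
      · simpa [hs', hj] using hskm
    · rw [hrec j hj]
      congr 2
      refine Finset.sum_congr rfl fun i hi => ?_
      rw [hle i (by have := Finset.mem_range.1 hi; omega)]
    · have hS : ∑ j ∈ Finset.range (k+1), C (a (j+1)) * s' j = -e := by
        rw [Finset.sum_range_succ, Finset.sum_congr rfl (g := fun j => C (a (j+1)) * s j)]
        · have : s' k = sk := by simp [hs']
          rw [this, hsk, mul_neg, ← mul_assoc, ← C_mul, mul_inv_cancel₀ ha]
          simp
        · intro j hj
          simp [hs', Finset.mem_range.1 hj]
      have hdouble : ∑ j ∈ Finset.range (k+1), C (a (j+1)) * ∑ i ∈ Finset.range (j+1), C (T i j) * h i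
          = ∑ i ∈ Finset.range (k+1), C (a' i) * h i := by
        simp only [ha', map_sum, Finset.sum_mul, Finset.mul_sum, C_mul, mul_assoc]
        apply Finset.sum_comm'
        intro x y
        simp only [Finset.mem_range, Finset.mem_Ico]
        omega
      have htot : ∑ i ∈ Finset.range (k+1+1), C (a i) * h' i = X * t' + C (a 0) * h0 := by
        rw [Finset.sum_range_succ', hle 0 (by omega), e0]
        congr 1
        rw [Finset.sum_congr rfl (g := fun j => X * (C (a (j+1)) *
          ∑ i ∈ Finset.range (j+1), C (T i j) * h i + C (a (j+1)) * s' j))]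
        · rw [← Finset.mul_sum, Finset.sum_add_distrib, hS, hdouble, he]
          ring
        · intro j hj
          rw [hrec j (Finset.mem_range.1 hj)]
          ring
      have hX := X_mul_divX_add (t - C (a 0) * h0)
      rw [htot, ht']
      have : X * (t - C (a 0) * h0).divX + C (a 0) * h0 - t = C (-(t - C (a 0) * h0).coeff 0) := by
        rw [C_neg]
        linear_combination hX
      rw [this, mem_degreeLT]
      exact lt_of_le_of_lt degree_C_le (by exact_mod_cast hp)

/-- final polynomial statement -/
theorem reach_final {K : Type*} [Field K] (T : ℕ → ℕ → K) (hT : ∀ i, T i i ≠ 0) (p : ℕ) (hp : 0 < p)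
    (h0 : K[X]) (hh0 : h0.natDegree ≤ p) (hc0 : h0.coeff p ≠ 0) (k : ℕ) (b : K[X]) (hb : b.Monic)
    (hbd : b.natDegree = p + (k + 1)) :
    ∃ h s : ℕ → K[X], ∃ μ : K, μ ≠ 0 ∧ h 0 = h0 ∧ (∀ j, s j ∈ degreeLT K p) ∧
      (∀ j < k + 1, h (j+1) = X * (∑ i ∈ Finset.range (j+1), C (T i j) * h i + s j)) ∧
      h (k+1) = C μ * (b - C (b.coeff 0)) := by
  set μ : K := T k k * ((∏ i ∈ Finset.range k, T i i) * h0.coeff p) with hμ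
  have hμ0 : μ ≠ 0 := mul_ne_zero (hT k) (mul_ne_zero (Finset.prod_ne_zero_iff.2 fun i _ => hT i) hc0)
  set t : K[X] := C μ * divX b with ht
  obtain ⟨h, s, e0, e1, e2, e3⟩ := reach T hT p hp h0 hh0 k (fun i => T i k) (hT k) t (by
      refine (natDegree_C_mul_le _ _).trans ?_
      rw [natDegree_divX_eq_natDegree_tsub_one]; omega) (by
      rw [ht, coeff_C_mul, coeff_divX, add_assoc, ← hbd, hb.coeff_natDegree, mul_one])
  set e := (∑ i ∈ Finset.range (k+1), C (T i k) * h i) - t with he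
  refine ⟨fun j => if j ≤ k then h j else C μ * (b - C (b.coeff 0)),
    fun j => if j < k then s j else -e, μ, hμ0, by simp [e0], fun j => ?_, fun j hj => ?_, by simp⟩
  · by_cases hj : j < k
    · simpa [hj] using e1 j
    · simpa [hj] using e3
  · have hsum : ∑ i ∈ Finset.range (j+1), C (T i j) * (if i ≤ k then h i else C μ * (b - C (b.coeff 0)))
      = ∑ i ∈ Finset.range (j+1), C (T i j) * h i := by
      refine Finset.sum_congr rfl fun i hi => ?_
      rw [if_pos (by have := Finset.mem_range.1 hi; omega)]
    rw [hsum]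
    beta_reduce
    rcases Nat.lt_succ_iff_lt_or_eq.1 hj with hlt | rfl
    · rw [if_pos (by omega), if_pos hlt, e2 j hlt]
    · rw [if_neg (by omega), if_neg (by omega), he, ht]
      have := X_mul_divX_add b
      linear_combination (-C μ) * this

/-- The cyclic shift on `Fin p ⊕ Fin q`. -/
def shiftSum {p q : ℕ} (hp : 0 < p) (hq : 0 < q) : Fin p ⊕ Fin q → Fin p ⊕ Fin q
  | Sum.inl i => if h : i.1 + 1 < p then Sum.inl ⟨i.1 + 1, h⟩ else Sum.inr ⟨0, hq⟩
  | Sum.inr i => if h : i.1 + 1 < q then Sum.inr ⟨i.1 + 1, h⟩ else Sum.inl ⟨0, hp⟩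

theorem shiftSum_injective {p q : ℕ} (hp : 0 < p) (hq : 0 < q) :
    Function.Injective (shiftSum hp hq) := by
  rintro (i | i) (j | j) h <;> simp only [shiftSum] at h <;> split_ifs at h <;>
    simp_all [Fin.ext_iff] <;> omega

theorem shiftSum_swap {p q : ℕ} (hp : 0 < p) (hq : 0 < q) (x : Fin q ⊕ Fin p) :
    shiftSum hp hq x.swap = (shiftSum hq hp x).swap := by
  rcases x with x | x
  · by_cases h : x.1 + 1 < q <;> simp [shiftSum, h]
  · by_cases h : x.1 + 1 < p <;> simp [shiftSum, h]

/-- Permutation matrix of the shift. -/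
def shiftMat (K : Type*) [Field K] {p q : ℕ} (hp : 0 < p) (hq : 0 < q) :
    Matrix (Fin p ⊕ Fin q) (Fin p ⊕ Fin q) K :=
  Matrix.of fun i j => if i = shiftSum hp hq j then 1 else 0

theorem shiftMat_transpose_mul (K : Type*) [Field K] {p q : ℕ} (hp : 0 < p) (hq : 0 < q) :
    (shiftMat K hp hq)ᵀ * shiftMat K hp hq = 1 := by
  ext i j
  simp [shiftMat, Matrix.mul_apply, Matrix.one_apply, (shiftSum_injective hp hq).eq_iff, eq_comm]

theorem shiftMat_swap (K : Type*) [Field K] {p q : ℕ} (hp : 0 < p) (hq : 0 < q) :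
    (shiftMat K hq hp).submatrix (Equiv.sumComm (Fin p) (Fin q)) (Equiv.sumComm (Fin p) (Fin q))
      = shiftMat K hp hq := by
  ext i j
  have h := shiftSum_swap hp hq j.swap
  rw [Sum.swap_swap] at h
  simp only [shiftMat, Matrix.submatrix_apply, Matrix.of_apply, Equiv.sumComm_apply, h]
  congr 1
  rw [eq_iff_iff]
  constructor
  · intro h; rw [← h, Sum.swap_swap]
  · intro h; rw [h, Sum.swap_swap]

/-- extension of a matrix to natural number indices -/
def extMat {K : Type*} [Field K] {p : ℕ} (U : Matrix (Fin p) (Fin p) K) (i j : ℕ) : K :=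
  if h : i < p ∧ j < p then U ⟨i, h.1⟩ ⟨j, h.2⟩ else 1

theorem extMat_diag {K : Type*} [Field K] {p : ℕ} (U : Matrix (Fin p) (Fin p) K)
    (hU : ∀ i, U i i ≠ 0) (i : ℕ) : extMat U i i ≠ 0 := by
  unfold extMat
  split_ifs
  · exact hU _
  · exact one_ne_zero

theorem extMat_sum {K : Type*} [Field K] {p : ℕ} (U : Matrix (Fin p) (Fin p) K)
    (hU : ∀ i j, j < i → U i j = 0) (g : ℕ → K[X]) (j : Fin p) :
    ∑ i : Fin p, C (U i j) * g i = ∑ i ∈ Finset.range (j.1 + 1), C (extMat U i j) * g i := by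
  have h1 : ∀ i : Fin p, C (U i j) * g i = C (extMat U i j) * g i := by
    intro i; simp [extMat]
  rw [Finset.sum_congr rfl fun i _ => h1 i,
    Fin.sum_univ_eq_sum_range (fun i => C (extMat U i j) * g i) p]
  symm
  apply Finset.sum_subset
  · intro i hi
    have := Finset.mem_range.1 hi
    exact Finset.mem_range.2 (by omega)
  · intro i hi hi'
    have h1 := Finset.mem_range.1 hi
    rw [Finset.mem_range] at hi'
    have : extMat U i j = 0 := by
      rw [extMat, dif_pos ⟨h1, j.2⟩]
      apply hU
      rw [Fin.lt_def]; simp; omega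
    simp [this]

theorem diag_ne_zero {K : Type*} [Field K] {p : ℕ} (U : Matrix (Fin p) (Fin p) K)
    (hU : ∀ i j, j < i → U i j = 0) (h : IsUnit U.det) (i : Fin p) : U i i ≠ 0 := by
  rw [Matrix.det_of_isUpperTriangular (fun i j hij => hU i j hij), isUnit_iff_ne_zero,
    Finset.prod_ne_zero_iff] at h
  exact h i (Finset.mem_univ _)

/-- corner scaling -/
def cornerVec {K : Type*} [Field K] (q : ℕ) (c : K) : Fin q → K :=
  fun k => if k.1 + 1 < q then 1 else c

theorem key {K : Type*} [Field K] {p q : ℕ} (hp : 0 < p) (hq : 0 < q)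
    (B : Matrix (Fin p ⊕ Fin q) (Fin p ⊕ Fin q) K) (hB : IsUnit B.det)
    (hc : B.charpoly = minpoly K B)
    (T1 : Matrix (Fin p) (Fin p) K) (T2 : Matrix (Fin q) (Fin q) K)
    (hT1 : ∀ i j, j < i → T1 i j = 0) (hT2 : ∀ i j, j < i → T2 i j = 0)
    (hd1 : IsUnit T1.det) (hd2 : IsUnit T2.det) :
    ∃ (T12 : Matrix (Fin p) (Fin q) K) (c : K) (Y : Matrix (Fin p ⊕ Fin q) (Fin p ⊕ Fin q) K),
      c ≠ 0 ∧ IsUnit Y.det ∧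
      B * Y * fromBlocks T1 T12 0 (T2 * diagonal (cornerVec q c)) = Y * shiftMat K hp hq := by
  obtain ⟨v, hv⟩ := exists_cyc B hc
  obtain ⟨f, f0, f1, f2⟩ := first_block (extMat T1) (extMat_diag T1 (diag_ne_zero T1 hT1 hd1)) p
  obtain ⟨k, rfl⟩ : ∃ k, q = k + 1 := ⟨q - 1, by omega⟩
  set b := B.charpoly with hb
  obtain ⟨h, s, μ, hμ, h0, hs, hrec, hlast⟩ := reach_final (extMat T2)
    (extMat_diag T2 (diag_ne_zero T2 hT2 hd2)) p hp (f p) (f2 p le_rfl).1 (f2 p le_rfl).2 k b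
    (Matrix.charpoly_monic B) (by rw [hb, Matrix.charpoly_natDegree_eq_dim]; simp)
  have hb0 : b.coeff 0 ≠ 0 := by
    intro h
    rw [Matrix.det_eq_sign_charpoly_coeff, ← hb, h, mul_zero] at hB
    exact not_isUnit_zero hB
  choose a ha using fun j => span_first f p (fun j hj => f2 j hj.le) (s j) (hs j)
  set c : K := (-(μ * b.coeff 0))⁻¹ with hcdef
  have hc0 : c ≠ 0 := inv_ne_zero (neg_ne_zero.2 (mul_ne_zero hμ hb0))
  let φ : K[X] →ₗ[K] (Fin p ⊕ Fin (k+1) → K) :=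
    { toFun := fun g => aeval B g *ᵥ v
      map_add' := by intro x y; simp [add_mulVec]
      map_smul' := by intro x y; simp [smul_mulVec] }
  have hφX : ∀ g, φ (X * g) = B *ᵥ φ g := by
    intro g; simp [φ, mulVec_mulVec]
  have hφ1 : φ 1 = v := by simp [φ]
  have hφb : φ b = 0 := by simp [φ, hb, Matrix.aeval_self_charpoly]
  have hφh : φ (C c * h (k+1)) = v := by
    rw [hlast, ← smul_eq_C_mul, ← smul_eq_C_mul, map_smul, map_smul, map_sub, hφb,
      ← mul_one (C (b.coeff 0)), ← smul_eq_C_mul, map_smul, hφ1, zero_sub, ← neg_smul, smul_smul,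
      smul_smul]
    convert one_smul K v using 2
    rw [hcdef]
    field_simp
  set F : Fin p ⊕ Fin (k+1) → K[X] := Sum.elim (fun i => f i) (fun i => h i) with hF
  set T12 : Matrix (Fin p) (Fin (k+1)) K := Matrix.of fun i j => a j i * cornerVec (k+1) c j with hT12
  set T := fromBlocks T1 T12 0 (T2 * diagonal (cornerVec (k+1) c)) with hT
  set Y : Matrix (Fin p ⊕ Fin (k+1)) (Fin p ⊕ Fin (k+1)) K := Matrix.of fun r i => φ (F i) r with hY
  have hcol : ∀ j, φ (X * ∑ i, C (T i j) * F i) = φ (F (shiftSum hp hq j)) := by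
    rintro (j | j)
    · have e1 : ∑ i, C (T i (Sum.inl j)) * F i = ∑ i : Fin p, C (T1 i j) * f i := by
        simp [Fintype.sum_sum_type, hT, hF]
      rw [e1, extMat_sum T1 hT1, ← f1 j j.2]
      by_cases hj : j.1 + 1 < p
      · simp [shiftSum, hj, hF]
      · have : j.1 + 1 = p := by omega
        simp [shiftSum, hF, this, h0]
    · have e1 : ∑ i, C (T i (Sum.inr j)) * F i = C (cornerVec (k+1) c j) *
          (∑ i : Fin (k+1), C (T2 i j) * h i + s j) := by
        rw [ha j]
        rw [← Fin.sum_univ_eq_sum_range (fun i => C (a j i) * f i) p]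
        simp only [Fintype.sum_sum_type, hT, hF, hT12, fromBlocks_apply₁₂, fromBlocks_apply₂₂,
          Matrix.of_apply, Sum.elim_inl, Sum.elim_inr, mul_diagonal, mul_add, Finset.mul_sum, C_mul]
        rw [add_comm]
        congr 1 <;> refine Finset.sum_congr rfl fun i _ => ?_ <;> ring
      rw [e1, extMat_sum T2 hT2, mul_left_comm, ← hrec j j.2]
      by_cases hj : j.1 + 1 < k + 1
      · simp only [shiftSum, cornerVec, hj, hF, if_true, dif_pos, C_1, one_mul, Sum.elim_inr]
      · have : j.1 + 1 = k + 1 := by omega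
        have e2 : cornerVec (k+1) c j = c := by simp [cornerVec, this]
        have e3 : F (shiftSum hp hq (Sum.inr j)) = 1 := by simp [shiftSum, this, hF, f0]
        rw [e2, e3, hφ1, this]
        exact hφh
  have heq : B * Y * T = Y * shiftMat K hp hq := by
    have hBY : B * Y = Matrix.of fun r i => φ (X * F i) r := by
      ext r i
      rw [Matrix.of_apply, hφX]
      rfl
    ext r j
    have h1 := congrFun (hcol j) r
    rw [hBY, Matrix.mul_apply, Matrix.mul_apply]
    simp only [Matrix.of_apply, shiftMat, hY, mul_ite, mul_one, mul_zero, Finset.sum_ite_eq',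
      Finset.mem_univ, if_true]
    rw [← h1, Finset.mul_sum, map_sum, Finset.sum_apply]
    refine Finset.sum_congr rfl fun i _ => ?_
    rw [mul_left_comm, ← smul_eq_C_mul, map_smul]
    simp [mul_comm]
  have hTdet : IsUnit T.det := by
    rw [hT, det_fromBlocks_zero₂₁, det_mul, det_diagonal]
    refine hd1.mul (hd2.mul ?_)
    rw [isUnit_iff_ne_zero, Finset.prod_ne_zero_iff]
    intro i _
    unfold cornerVec
    split_ifs
    · exact one_ne_zero
    · exact hc0
  refine ⟨T12, c, Y, hc0, ?_, heq⟩
  rw [← Matrix.isUnit_iff_isUnit_det, ← Matrix.mulVec_surjective_iff_isUnit]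
  have htop : LinearMap.range Y.mulVecLin = ⊤ := by
    apply hv
    · refine ⟨Pi.single (Sum.inl ⟨0, hp⟩) 1, ?_⟩
      ext r
      simp [hY, hF, f0, hφ1]
    · rintro _ ⟨y, rfl⟩
      have h2 : B * Y = Y * (shiftMat K hp hq * T⁻¹) := by
        rw [← mul_assoc, ← heq, Matrix.mul_nonsing_inv_cancel_right _ _ hTdet]
      refine ⟨(shiftMat K hp hq * T⁻¹) *ᵥ y, ?_⟩
      simp only [mulVecLin_apply, mulVec_mulVec, h2]
  intro y
  have : y ∈ LinearMap.range Y.mulVecLin := by rw [htop]; trivial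
  obtain ⟨x, hx⟩ := this
  exact ⟨x, hx⟩

theorem upper_inv {K : Type*} [Field K] {p : ℕ} (U : Matrix (Fin p) (Fin p) K)
    (hU : ∀ i j, j < i → U i j = 0) (h : IsUnit U.det) (i j : Fin p) (hij : j < i) :
    U⁻¹ i j = 0 := by
  have : Invertible U := Matrix.invertibleOfIsUnitDet U h
  have h1 : U.BlockTriangular id := fun i j hij => hU i j hij
  exact Matrix.blockTriangular_inv_of_blockTriangular h1 hij

theorem det_corner {K : Type*} [Field K] {q : ℕ} (hq : 0 < q) (c : K) :
    (diagonal (cornerVec q c)).det = c := by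
  rw [det_diagonal, Finset.prod_eq_single (⟨q - 1, by omega⟩ : Fin q)]
  · simp only [cornerVec]
    rw [if_neg (by omega)]
  · intro b _ hb
    simp only [cornerVec]
    rw [if_pos]
    have : b.1 ≠ q - 1 := fun h => hb (Fin.ext h)
    omega
  · simp

theorem corner_mul {K : Type*} [Field K] {q : ℕ} (c : K) (hc : c ≠ 0) :
    diagonal (cornerVec q c) * diagonal (cornerVec q c⁻¹) = 1 := by
  rw [diagonal_mul_diagonal, ← diagonal_one]
  congr 1
  ext i
  simp only [cornerVec]
  split_ifs <;> simp [hc]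

theorem corner_one {K : Type*} [Field K] {q : ℕ} :
    diagonal (cornerVec q (1 : K)) = 1 := by
  rw [← diagonal_one]
  congr 1
  ext i
  simp [cornerVec]

theorem combine {ι : Type*} [Fintype ι] [DecidableEq ι] {K : Type*} [Field K]
    (A B X Y Z T S : Matrix ι ι K) (hX : IsUnit X.det) (hY : IsUnit Y.det)
    (hZ : Zᵀ * Z = 1) (h1 : B * X * T = X * Z) (h2 : S * Y * A = Zᵀ * Y) :
    ((Y * A * Y⁻¹) * (X⁻¹ * B * X)) * (T * S) = 1 := by
  have e1 : X⁻¹ * B * X * T = Z := by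
    rw [mul_assoc, mul_assoc, ← mul_assoc B, h1, Matrix.nonsing_inv_mul_cancel_left _ _ hX]
  have e2 : S * (Y * A * Y⁻¹) = Zᵀ := by
    rw [← mul_assoc, ← mul_assoc, h2, Matrix.mul_nonsing_inv_cancel_right _ _ hY]
  rw [← mul_assoc, mul_eq_one_comm]
  rw [mul_assoc, e1, ← mul_assoc, e2, hZ]

theorem main_aux {K : Type*} [Field K] {p q : ℕ} (hp : 0 < p) (hq : 0 < q)
    (A B : Matrix (Fin p ⊕ Fin q) (Fin p ⊕ Fin q) K)
    (hA : IsUnit A.det) (hB : IsUnit B.det)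
    (hcA : A.charpoly = minpoly K A) (hcB : B.charpoly = minpoly K B)
    (P₁ : Matrix (Fin p) (Fin p) K) (P₂ : Matrix (Fin q) (Fin q) K)
    (hP₁ : IsUnit P₁.det) (hP₂ : IsUnit P₂.det)
    (hdet : P₁.det * P₂.det = A.det * B.det) :
    ∃ (C : Matrix (Fin p) (Fin q) K)
      (X Y : Matrix (Fin p ⊕ Fin q) (Fin p ⊕ Fin q) K),
      IsUnit X.det ∧ IsUnit Y.det ∧
      Matrix.fromBlocks P₁ C 0 P₂ = (X * A * X⁻¹) * (Y * B * Y⁻¹) := by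
  obtain ⟨Q1, L1, R1, hQ1, hL1, hR1, e1⟩ := exists_LU p P₁
  obtain ⟨Q2, L2, R2, hQ2, hL2, hR2, e2⟩ := exists_LU q P₂
  have d1 : P₁.det = L1.det * R1.det := by
    have := congrArg Matrix.det e1
    rw [det_mul, det_mul, det_mul, mul_comm] at this
    exact hQ1.mul_left_cancel this
  have d2 : P₂.det = L2.det * R2.det := by
    have := congrArg Matrix.det e2
    rw [det_mul, det_mul, det_mul, mul_comm] at this
    exact hQ2.mul_left_cancel this
  have hL1d : IsUnit L1.det := by rw [d1] at hP₁; exact isUnit_of_mul_isUnit_left hP₁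
  have hR1d : IsUnit R1.det := by rw [d1] at hP₁; exact isUnit_of_mul_isUnit_right hP₁
  have hL2d : IsUnit L2.det := by rw [d2] at hP₂; exact isUnit_of_mul_isUnit_left hP₂
  have hR2d : IsUnit R2.det := by rw [d2] at hP₂; exact isUnit_of_mul_isUnit_right hP₂
  obtain ⟨T12, c, X, hc, hX, hBX⟩ := key hp hq B hB hcB R1⁻¹ R2⁻¹ (upper_inv R1 hR1 hR1d)
    (upper_inv R2 hR2 hR2d) (Matrix.isUnit_nonsing_inv_det _ hR1d)
    (Matrix.isUnit_nonsing_inv_det _ hR2d)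
  set S1 : Matrix (Fin p) (Fin p) K := L1ᵀ⁻¹ with hS1
  set S2 : Matrix (Fin q) (Fin q) K := L2ᵀ⁻¹ * diagonal (cornerVec q c⁻¹) with hS2
  have hL1t : IsUnit L1ᵀ.det := by rwa [det_transpose]
  have hL2t : IsUnit L2ᵀ.det := by rwa [det_transpose]
  obtain ⟨S12, a, Y, ha, hY, hAY⟩ := key hq hp (Aᵀ.submatrix (Equiv.sumComm (Fin q) (Fin p))
    (Equiv.sumComm (Fin q) (Fin p)))
    (by rw [det_submatrix_equiv_self, det_transpose]; exact hA)
    (cyc_transpose_swap A _ hcA) S2 S1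
    (fun i j hij => by
      rw [hS2, mul_diagonal, upper_inv L2ᵀ (fun i j h => hL2 j i h) hL2t i j hij, zero_mul])
    (upper_inv L1ᵀ (fun i j h => hL1 j i h) hL1t)
    (by
      rw [hS2, det_mul, det_corner hq]
      exact (Matrix.isUnit_nonsing_inv_det _ hL2t).mul (isUnit_iff_ne_zero.2 (inv_ne_zero hc)))
    (Matrix.isUnit_nonsing_inv_det _ hL1t)
  set e := Equiv.sumComm (Fin p) (Fin q) with he
  set Y' := (Y.submatrix e e)ᵀ with hY'
  have hY'd : IsUnit Y'.det := by
    rw [hY', det_transpose, det_submatrix_equiv_self]; exact hY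
  set S := (fromBlocks (S1 * diagonal (cornerVec p a)) 0 S12 S2)ᵀ with hS
  have hSA : S * Y' * A = (shiftMat K hp hq)ᵀ * Y' := by
    have h := congrArg (fun M => (M.submatrix e e)ᵀ) hAY
    beta_reduce at h
    rw [Matrix.submatrix_mul _ _ e e e e.bijective, Matrix.submatrix_mul _ _ e e e e.bijective,
      Matrix.submatrix_mul _ _ e e e e.bijective, he, shiftMat_swap, ← he,
      transpose_mul, transpose_mul, transpose_mul] at h
    have h3 : ((Aᵀ.submatrix (Equiv.sumComm (Fin q) (Fin p))
        (Equiv.sumComm (Fin q) (Fin p))).submatrix e e)ᵀ = A := by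
      ext i j
      simp [he]
    have h4 : ((fromBlocks S2 S12 0 (S1 * diagonal (cornerVec p a))).submatrix e e)ᵀ = S := by
      rw [hS, he]
      congr 1
      ext i j
      rcases i with i | i <;> rcases j with j | j <;> simp
    rw [h3, h4] at h
    rw [mul_assoc]
    exact h
  have hcomb := combine A B X Y' _ _ S hX hY'd (shiftMat_transpose_mul K hp hq) hBX hSA
  set N := (Y' * A * Y'⁻¹) * (X⁻¹ * B * X) with hN
  have hNdet : N.det = A.det * B.det := by
    rw [hN, det_mul, det_conj (Matrix.isUnit_iff_isUnit_det _ |>.2 hY'd),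
      det_conj' (Matrix.isUnit_iff_isUnit_det _ |>.2 hX)]
  have hS' : S = fromBlocks (diagonal (cornerVec p a) * L1⁻¹) S12ᵀ 0
      (diagonal (cornerVec q c⁻¹) * L2⁻¹) := by
    rw [hS, fromBlocks_transpose, hS1, hS2]
    simp [transpose_mul, transpose_nonsing_inv]
  rw [hS', fromBlocks_multiply] at hcomb
  simp only [Matrix.mul_zero, Matrix.zero_mul, add_zero, zero_add] at hcomb
  have h22 : R2⁻¹ * diagonal (cornerVec q c) * (diagonal (cornerVec q c⁻¹) * L2⁻¹) = (L2 * R2)⁻¹ := by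
    rw [mul_assoc, ← mul_assoc (diagonal _), corner_mul c hc, one_mul, Matrix.mul_inv_rev]
  rw [h22] at hcomb
  have ha1 : a = 1 := by
    have h := congrArg Matrix.det hcomb
    rw [det_mul, hNdet, det_fromBlocks_zero₂₁, det_mul, det_mul, det_corner hp, det_one,
      ← hdet, d1, d2, det_nonsing_inv, det_nonsing_inv, det_nonsing_inv, det_mul,
      Ring.inverse_eq_inv'] at h
    have n1 := hL1d.ne_zero
    have n2 := hR1d.ne_zero
    have n3 := hL2d.ne_zero
    have n4 := hR2d.ne_zero
    field_simp at h
    exact h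
  rw [ha1, corner_one, one_mul, ← Matrix.mul_inv_rev] at hcomb
  generalize (R1⁻¹ * S12ᵀ + T12 * (diagonal (cornerVec q c⁻¹) * L2⁻¹)) = E at hcomb
  have hM1 : IsUnit (L1 * R1).det := by rw [det_mul]; exact hL1d.mul hR1d
  have hM2 : IsUnit (L2 * R2).det := by rw [det_mul]; exact hL2d.mul hR2d
  generalize L1 * R1 = M1 at *
  generalize L2 * R2 = M2 at *
  set E' := -(M1 * E * M2) with hE'
  have hinv : fromBlocks M1⁻¹ E 0 M2⁻¹ * fromBlocks M1 E' 0 M2 = 1 := by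
    rw [fromBlocks_multiply, hE']
    simp only [Matrix.mul_zero, Matrix.zero_mul, add_zero, zero_add, Matrix.mul_neg,
      Matrix.nonsing_inv_mul _ hM1, Matrix.nonsing_inv_mul _ hM2]
    rw [Matrix.mul_assoc M1, Matrix.nonsing_inv_mul_cancel_left _ _ hM1, neg_add_cancel, neg_zero, zero_add,
      fromBlocks_one]
  have hNeq : N = fromBlocks M1 E' 0 M2 := by
    calc N = N * (fromBlocks M1⁻¹ E 0 M2⁻¹ * fromBlocks M1 E' 0 M2) := by rw [hinv, mul_one]
      _ = _ := by rw [← mul_assoc, hcomb, one_mul]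
  set G : Matrix (Fin p ⊕ Fin q) (Fin p ⊕ Fin q) K := fromBlocks Q1 0 0 Q2 with hG
  have hGd : IsUnit G.det := by
    rw [hG, det_fromBlocks_zero₂₁]; exact hQ1.mul hQ2
  have hfin : fromBlocks P₁ (Q1 * E' * Q2⁻¹) 0 P₂ * G = G * N := by
    rw [hNeq, hG, fromBlocks_multiply, fromBlocks_multiply]
    simp only [Matrix.mul_zero, Matrix.zero_mul, add_zero, zero_add, e1, e2,
      Matrix.nonsing_inv_mul_cancel_right _ _ hQ2]
  refine ⟨Q1 * E' * Q2⁻¹, G * Y', G * X⁻¹, ?_, ?_, ?_⟩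
  · rw [det_mul]; exact hGd.mul hY'd
  · rw [det_mul]; exact hGd.mul (Matrix.isUnit_nonsing_inv_det _ hX)
  · calc _ = G * N * G⁻¹ := by rw [← hfin, Matrix.mul_nonsing_inv_cancel_right _ _ hGd]
      _ = _ := by
        rw [Matrix.mul_inv_rev, Matrix.mul_inv_rev, Matrix.nonsing_inv_nonsing_inv _ hX, hN]
        have : G⁻¹ * G = 1 := Matrix.nonsing_inv_mul _ hGd
        simp only [mul_assoc]
        rw [Matrix.nonsing_inv_mul_cancel_left _ _ hGd]


theorem product_of_cyclic_classes_contains_block_triangular {K : Type*} [Field K]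
    {n m : ℕ} (hn : 2 ≤ n) (hm : 1 ≤ m) (hmn : m ≤ n - 1)
    (A B : Matrix (Fin m ⊕ Fin (n - m)) (Fin m ⊕ Fin (n - m)) K)
    (hA : IsUnit A.det) (hB : IsUnit B.det)
    (hcA : IsCyclicMat A) (hcB : IsCyclicMat B)
    (P₁ : Matrix (Fin m) (Fin m) K) (P₂ : Matrix (Fin (n - m)) (Fin (n - m)) K)
    (hP₁ : IsUnit P₁.det) (hP₂ : IsUnit P₂.det)
    (hdet : P₁.det * P₂.det = A.det * B.det) :
    ∃ (C : Matrix (Fin m) (Fin (n - m)) K)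
      (X Y : Matrix (Fin m ⊕ Fin (n - m)) (Fin m ⊕ Fin (n - m)) K),
      IsUnit X.det ∧ IsUnit Y.det ∧
      Matrix.fromBlocks P₁ C 0 P₂ = (X * A * X⁻¹) * (Y * B * Y⁻¹) := by
  exact main_aux (by omega) (by omega) A B hA hB hcA hcB P₁ P₂ hP₁ hP₂ hdet
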